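/- If z_k = 0 for all k ≥ −1 and y_k = 0 for all k ≥ 0, then x_k = 0 for all k ≥ 0. -/

import Mathlib

/- STATEMENT 17.  If z_k = 0 for all k ≥ −1 and y_k = 0 for all k ≥ 0, then
x_k = 0 for all k ≥ 0. -/

noncomputable section

/-- index set for the variables of the large phase space of ℂP¹:
`none` is the genus parameter `ε`, `some (inl k)` is `sₖ`, `some (inr k)` is `tₖ`. -/
abbrev Idx : Type := Option (ℕ ⊕ ℕ)

/-- `ℚ[q]`. -/
abbrev Base : Type := Polynomial ℚ

/-- the large phase space ring `B = ℚ[q][[ε]][[s₀,s₁,…,t₀,t₁,…]]`, realized as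
formal power series over `ℚ[q]` in `ε` and the `sₖ`, `tₖ`. -/
abbrev B : Type := MvPowerSeries Idx Base

/-- coefficient extraction. -/
def cf (f : B) (m : Idx →₀ ℕ) : Base := f m

/-- build a power series from its coefficients. -/
def mk' (c : (Idx →₀ ℕ) → Base) : B := c

/-- the variable `sₖ`. -/
def sVar (k : ℕ) : B := MvPowerSeries.X (some (Sum.inl k))

/-- the variable `tₖ`. -/
def tVar (k : ℕ) : B := MvPowerSeries.X (some (Sum.inr k))

/-- the genus parameter `ε`. -/
def epsB : B := MvPowerSeries.X none

/-- `∂_{k,P} = ∂/∂sₖ`, coefficientwise. -/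
def pdP (k : ℕ) (f : B) : B :=
  mk' fun m => ((m (some (Sum.inl k)) : Base) + 1) *
    cf f (m + Finsupp.single (some (Sum.inl k)) 1)

/-- `∂_{k,Q} = ∂/∂tₖ`, coefficientwise. -/
def pdQ (k : ℕ) (f : B) : B :=
  mk' fun m => ((m (some (Sum.inr k)) : Base) + 1) *
    cf f (m + Finsupp.single (some (Sum.inr k)) 1)

/-- `∂ = ∂_{0,P}`. -/
def Dop : B → B := pdP 0

/-- `E^c = exp(cε∂) = Σₘ (cε)ᵐ∂ᵐ/m!`, well defined coefficientwise. -/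
def Ec (c : ℚ) (f : B) : B :=
  mk' fun m => ∑ j ∈ Finset.range (m none + 1),
    (c ^ j / (j.factorial : ℚ)) • cf (Dop^[j] f) (m - Finsupp.single none j)

/-- `∇ = ε⁻¹(E^{1/2} − E^{−1/2}) = Σ_{m≥1} (((1/2)ᵐ − (−1/2)ᵐ)/m!) εᵐ⁻¹ ∂ᵐ`,
well defined coefficientwise (the `m = 0` terms cancel, so no negative powers
of `ε` occur). -/
def nab (f : B) : B :=
  mk' fun m => ∑ j ∈ Finset.range (m none + 1),
    (((1/2 : ℚ) ^ (j+1) - (-1/2 : ℚ) ^ (j+1)) / ((j+1).factorial : ℚ)) •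
      cf (Dop^[j+1] f) (m - Finsupp.single none j)

/-- `Δ = E^{1/2} + E^{−1/2}`, coefficientwise. -/
def Delta (f : B) : B :=
  mk' fun m => ∑ j ∈ Finset.range (m none + 1),
    (((1/2 : ℚ) ^ j + (-1/2 : ℚ) ^ j) / (j.factorial : ℚ)) •
      cf (Dop^[j] f) (m - Finsupp.single none j)

variable (F : B)

/-- `⟨⟨τ_{i,Q}⟩⟩` for `i : ℤ`, with the convention `τ_{−1,Q} = 0`. -/
def tauQ (i : ℤ) : B := if 0 ≤ i then pdQ i.toNat F else 0

/-- `⟨⟨τ_{i,P}⟩⟩` for `i : ℤ`, with the convention `τ_{−1,P} = 0`. -/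
def tauP (i : ℤ) : B := if 0 ≤ i then pdP i.toNat F else 0

/-- `v = ∇∂_QF`. -/
def vB : B := nab (pdQ 0 F)

/-- the operator `𝒟 = v∇ + Δ∘∂_Q`. -/
def Dcal (g : B) : B := vB F * nab g + Delta (pdQ 0 g)

/-- `cₖᵐ = m(m+1)⋯(m+k)` (for `k ≥ −1`; the empty product `1` when `k = −1`). -/
def cc (k : ℤ) (m : ℕ) : ℚ := ∏ l ∈ Finset.range (k + 1).toNat, ((m : ℚ) + l)

/-- `dₖᵐ = eₖ(m, m+1, …, m+k)`, the `k`-th elementary symmetric function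
(`d₋₁ᵐ = 0`, `d₀ᵐ = 1`). -/
def dd (k : ℤ) (m : ℕ) : ℚ :=
  ∑ j ∈ Finset.range (k + 1).toNat,
    ∏ l ∈ (Finset.range (k + 1).toNat).erase j, ((m : ℚ) + l)

/-- the quadratic part `Σ_{i+j=k, i,j≥1} i!·j!·(ε²⟨⟨τ_{i−1,Q}τ_{j−1,Q}⟩⟩ +
⟨⟨τ_{i−1,Q}⟩⟩⟨⟨τ_{j−1,Q}⟩⟩)` of the Virasoro constraint. -/
def quad (k : ℤ) : B :=
  ∑ i ∈ Finset.range (k - 1).toNat,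
    (((i+1).factorial * ((k - (i+1)).toNat.factorial) : ℚ)) •
      (epsB ^ 2 * pdQ i (pdQ ((k - (i+2)).toNat) F) + pdQ i F * pdQ ((k - (i+2)).toNat) F)

/-- the Virasoro constraint `z_k`, `k ≥ −1`: the infinite sums
`Σₘ cₖ^{m+1}tₘ⟨⟨τ_{m+k,Q}⟩⟩ + cₖᵐsₘ⟨⟨τ_{m+k,P}⟩⟩ + 2dₖᵐsₘ⟨⟨τ_{m+k−1,Q}⟩⟩` are
well defined coefficientwise; the terms `s̃ₘ = sₘ − δ_{m,1}` contribute
the corrections `−cₖ¹⟨⟨τ_{k+1,P}⟩⟩ − 2dₖ¹⟨⟨τ_{k,Q}⟩⟩`. -/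
def z (k : ℤ) : B :=
  mk' (fun μ => ∑ j ∈ μ.support,
    match j with
    | some (Sum.inr m) => cc k (m+1) • cf (tauQ F ((m : ℤ) + k)) (μ - Finsupp.single j 1)
    | some (Sum.inl m) => cc k m • cf (tauP F ((m : ℤ) + k)) (μ - Finsupp.single j 1)
        + (2 * dd k m) • cf (tauQ F ((m : ℤ) + k - 1)) (μ - Finsupp.single j 1)
    | none => 0)
  - cc k 1 • tauP F (1 + k) - (2 * dd k 1) • tauQ F k
  + quad F k
  + (if k = -1 then sVar 0 * tVar 0 else 0)
  + (if k = 0 then sVar 0 ^ 2 else 0)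

/-- the constraint `y_k = 𝒟⟨⟨τ_{k,Q}⟩⟩ − (k+2)∇⟨⟨τ_{k+1,Q}⟩⟩`. -/
def y (k : ℕ) : B := Dcal F (pdQ k F) - ((k : ℚ) + 2) • nab (pdQ (k+1) F)

/-- the constraint `x_k = 𝒟⟨⟨τ_{k,P}⟩⟩ − (k+1)∇⟨⟨τ_{k+1,P}⟩⟩ − 2∇⟨⟨τ_{k,Q}⟩⟩`. -/
def x (k : ℕ) : B :=
  Dcal F (pdP k F) - ((k : ℚ) + 1) • nab (pdP (k+1) F) - (2 : ℚ) • nab (pdQ k F)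

/-!
`E^c` is a ring automorphism, which gives product rules for `∇`, `Δ` and `𝒟`. With the convention
`⟨⟨τ_{-1,Q}⟩⟩ = s₀`, the equations `y_k = 0` and the definition of `𝒟` become the single rule
`𝒟⟨⟨τ_{i-1,Q}⟩⟩ = (i+1)∇⟨⟨τ_{i,Q}⟩⟩` for `i ≥ 0`, and the exceptional terms of the Virasoro
constraints are absorbed into their quadratic parts. In `𝒟 z_{n-1} - ∇ z_n = 0` all terms in the
`⟨⟨τ_{i,Q}⟩⟩` then cancel and there remains `∑ₘ (m+1)(m+2)⋯(m+n) s̃_{m+1} x_{m+n} = 0`. The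
dilaton shift turns this into `n! xₙ = ∑ₘ (m+1)(m+2)⋯(m+n) s_{m+1} x_{m+n}`, so the order of every
`xₙ` as a power series exceeds the least order among all of them: it is infinite.
-/

open Finset MvPowerSeries
open scoped Nat MvPowerSeries.WithPiTopology

theorem hasSum_sum_antidiagonal_mul {A : Type*} [NonUnitalNonAssocSemiring A] [TopologicalSpace A]
    [IsTopologicalSemiring A] [T3Space A] {f g : ℕ → A} {a b : A} (hf : HasSum f a)
    (hg : HasSum g b) (hfg : Summable fun p : ℕ × ℕ ↦ f p.1 * g p.2) :
    HasSum (fun n ↦ ∑ p ∈ antidiagonal n, f p.1 * g p.2) (a * b) := by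
  rw [← hf.tsum_eq, ← hg.tsum_eq,
    hf.summable.tsum_mul_tsum_eq_tsum_sum_antidiagonal hg.summable hfg]
  exact (summable_sum_mul_antidiagonal_of_summable_mul hfg).hasSum

section PowerSeries

variable {σ R : Type*} [CommSemiring R]

theorem coeff_X_pow_mul (s : σ) (n : ℕ) (f : MvPowerSeries σ R) (m : σ →₀ ℕ) :
    coeff m (X s ^ n * f) = if n ≤ m s then coeff (m - Finsupp.single s n) f else 0 := by
  classical
  simp only [X_pow_eq, coeff_monomial_mul, Finsupp.single_le_iff, one_mul]

theorem pderiv_pderiv_comm (i j : σ) (f : MvPowerSeries σ R) :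
    pderiv R i (pderiv R j f) = pderiv R j (pderiv R i f) := by
  classical
  rcases eq_or_ne i j with rfl | h
  · rfl
  ext m
  simp only [coeff_pderiv, Finsupp.add_apply, Finsupp.single_eq_of_ne h,
    Finsupp.single_eq_of_ne h.symm, add_zero, add_right_comm m]
  ring

theorem X_pow_mul_sum_antidiagonal (s : σ) (f g : ℕ → MvPowerSeries σ R) (n : ℕ) :
    X s ^ n * ∑ p ∈ antidiagonal n, f p.1 * g p.2 =
      ∑ p ∈ antidiagonal n, (X s ^ p.1 * f p.1) * (X s ^ p.2 * g p.2) := by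
  rw [mul_sum]
  refine sum_congr rfl fun p hp ↦ ?_
  rw [mul_mul_mul_comm, ← pow_add, mem_antidiagonal.mp hp]

variable [TopologicalSpace R]

theorem continuous_pderiv [ContinuousMul R] (i : σ) : Continuous (pderiv R i) :=
  continuous_pi fun m ↦
    ((WithPiTopology.continuous_coeff R _).mul continuous_const).congr fun f ↦
      (coeff_pderiv f m).symm

theorem hasSum_X_pow_mul (s : σ) (g : ℕ → MvPowerSeries σ R) :
    HasSum (fun j ↦ X s ^ j * g j)
      (fun m ↦ ∑ j ∈ range (m s + 1), coeff (m - Finsupp.single s j) (g j)) := by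
  refine WithPiTopology.hasSum_iff_hasSum_coeff.mpr fun m ↦ ?_
  have hsum : HasSum (fun j ↦ coeff m (X s ^ j * g j))
      (∑ j ∈ range (m s + 1), coeff m (X s ^ j * g j)) :=
    hasSum_sum_of_ne_finset_zero fun j hj ↦
      (coeff_X_pow_mul s j (g j) m).trans (if_neg (mt mem_range_succ_iff.mpr hj))
  rwa [sum_congr rfl fun j hj ↦
    (coeff_X_pow_mul s j (g j) m).trans (if_pos (mem_range_succ_iff.mp hj))] at hsum

theorem continuous_sum_coeff_sub_single [ContinuousAdd R] {α : Type*} [TopologicalSpace α]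
    (s : σ) {g : ℕ → α → MvPowerSeries σ R} (hg : ∀ j, Continuous (g j)) :
    Continuous fun a ↦ (fun m ↦ ∑ j ∈ range (m s + 1), coeff (m - Finsupp.single s j) (g j a) :
      MvPowerSeries σ R) :=
  continuous_pi fun m ↦ continuous_finsetSum _ fun j _ ↦
    (WithPiTopology.continuous_coeff R (m - Finsupp.single s j)).comp (hg j)

theorem hasSum_X_mul (g : σ → MvPowerSeries σ R) :
    HasSum (fun i ↦ X i * g i)
      (fun m ↦ ∑ i ∈ m.support, coeff (m - Finsupp.single i 1) (g i)) := by
  classical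
  refine WithPiTopology.hasSum_iff_hasSum_coeff.mpr fun m ↦ ?_
  have hterm (i : σ) : coeff m (X i * g i) =
      if i ∈ m.support then coeff (m - Finsupp.single i 1) (g i) else 0 := by
    simpa [Nat.one_le_iff_ne_zero] using coeff_X_pow_mul i 1 (g i) m
  have hsum : HasSum (fun i ↦ coeff m (X i * g i)) (∑ i ∈ m.support, coeff m (X i * g i)) :=
    hasSum_sum_of_ne_finset_zero fun i hi ↦ (hterm i).trans (if_neg hi)
  rwa [sum_congr rfl fun i hi ↦ (hterm i).trans (if_pos hi)] at hsum

theorem summable_X_pow_mul_mul_X_pow_mul (s : σ) (f g : ℕ → MvPowerSeries σ R) :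
    Summable fun p : ℕ × ℕ ↦ (X s ^ p.1 * f p.1) * (X s ^ p.2 * g p.2) := by
  refine WithPiTopology.summable_iff_summable_coeff.mpr fun m ↦
    summable_of_hasFiniteSupport <| (finite_toSet (range (m s + 1) ×ˢ range (m s + 1))).subset ?_
  intro p hp
  have hle : p.1 + p.2 ≤ m s := by
    by_contra hlt
    refine hp ?_
    beta_reduce
    rw [mul_mul_mul_comm, ← pow_add, coeff_X_pow_mul, if_neg hlt]
  simp only [coe_product, coe_range, Set.mem_prod, Set.mem_Iio]
  omega

theorem hasSum_X_pow_mul_mul [IsTopologicalSemiring R] [T3Space R] {s : σ}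
    {f g : ℕ → MvPowerSeries σ R} {a b : MvPowerSeries σ R}
    (hf : HasSum (fun j ↦ X s ^ j * f j) a) (hg : HasSum (fun j ↦ X s ^ j * g j) b) :
    HasSum (fun n ↦ X s ^ n * ∑ p ∈ antidiagonal n, f p.1 * g p.2) (a * b) := by
  have : T3Space (MvPowerSeries σ R) := inferInstanceAs (T3Space ((σ →₀ ℕ) → R))
  have hprod := hasSum_sum_antidiagonal_mul hf hg (summable_X_pow_mul_mul_X_pow_mul s f g)
  simpa only [X_pow_mul_sum_antidiagonal] using hprod

theorem eq_zero_of_hasSum_mul [T2Space R] {ι κ : Type*} {f : ι → MvPowerSeries σ R}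
    {b : ι → κ → MvPowerSeries σ R} {e : ι → κ → ι} (hb : ∀ i k, constantCoeff (b i k) = 0)
    (h : ∀ i, HasSum (fun k ↦ b i k * f (e i k)) (f i)) (i : ι) : f i = 0 := by
  have horder (n : ℕ) : ∀ i, (n : ℕ∞) ≤ (f i).order := by
    induction n with
    | zero => simp
    | succ n ih =>
      intro i
      have hterm (k : κ) : ((n + 1 : ℕ) : ℕ∞) ≤ (b i k * f (e i k)).order := by
        rw [Nat.cast_succ, add_comm]
        exact (add_le_add (one_le_order_iff_constCoeff_eq_zero.mpr (hb i k)) (ih _)).trans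
          le_order_mul
      refine le_order fun d hd ↦ ?_
      have hcoeff := (WithPiTopology.hasSum_iff_hasSum_coeff).mp (h i) d
      simp only [coeff_of_lt_order (hd.trans_le (hterm _))] at hcoeff
      exact hcoeff.unique hasSum_zero
  exact order_eq_top_iff.mp (ENat.eq_top_iff_forall_ge.mpr fun n ↦ horder n i)

end PowerSeries

theorem iterate_derivation_mul {R A : Type*} [CommSemiring R] [CommSemiring A] [Algebra R A]
    (D : Derivation R A A) (n : ℕ) (a b : A) :
    D^[n] (a * b) = ∑ p ∈ antidiagonal n, n.choose p.1 • (D^[p.1] a * D^[p.2] b) := by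
  induction n with
  | zero => simp
  | succ n ih =>
    simp only [Function.iterate_succ_apply', ih, map_sum, map_nsmul, Derivation.leibniz,
      sum_antidiagonal_choose_succ_nsmul fun i j ↦ D^[i] a * D^[j] b, ← sum_add_distrib]
    refine sum_congr rfl fun p hp ↦ ?_
    rw [Nat.choose_symm_of_eq_add (mem_antidiagonal.mp hp).symm, smul_eq_mul, smul_eq_mul,
      smul_add, mul_comm (D^[p.2] b)]

-- With the discrete topology on `ℚ[q]`, convergence in `B` is eventual stabilization of each
-- coefficient, so that the coefficientwise infinite sums of the definitions become `HasSum`s.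
local instance : TopologicalSpace Base := ⊥

local instance : DiscreteTopology Base := ⟨rfl⟩

section ShiftOperators

theorem pdP_eq_pderiv (k : ℕ) : pdP k = pderiv Base (some (Sum.inl k)) :=
  funext fun f ↦ ext fun m ↦ (mul_comm _ _).trans (coeff_pderiv f m).symm

theorem pdQ_eq_pderiv (k : ℕ) : pdQ k = pderiv Base (some (Sum.inr k)) :=
  funext fun f ↦ ext fun m ↦ (mul_comm _ _).trans (coeff_pderiv f m).symm

theorem Dop_eq_pderiv : Dop = pderiv Base (some (Sum.inl 0)) :=
  pdP_eq_pderiv 0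

theorem hasSum_Ec (c : ℚ) (f : B) :
    HasSum (fun j ↦ epsB ^ j * ((c ^ j / (j ! : ℚ)) • Dop^[j] f)) (Ec c f) :=
  hasSum_X_pow_mul none _

theorem hasSum_nab (f : B) :
    HasSum (fun j ↦ epsB ^ j *
      ((((1 / 2 : ℚ) ^ (j + 1) - (-1 / 2 : ℚ) ^ (j + 1)) / ((j + 1)! : ℚ)) • Dop^[j + 1] f))
      (nab f) :=
  hasSum_X_pow_mul none _

theorem hasSum_Delta (f : B) :
    HasSum (fun j ↦ epsB ^ j *
      ((((1 / 2 : ℚ) ^ j + (-1 / 2 : ℚ) ^ j) / (j ! : ℚ)) • Dop^[j] f)) (Delta f) :=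
  hasSum_X_pow_mul none _

theorem Delta_eq_Ec_add_Ec (f : B) : Delta f = Ec (1 / 2) f + Ec (-1 / 2) f := by
  refine (hasSum_Delta f).unique <|
    ((hasSum_Ec _ f).add (hasSum_Ec _ f)).congr_fun fun j ↦ ?_
  rw [add_div, add_smul, mul_add]

theorem epsB_mul_nab (f : B) : epsB * nab f = Ec (1 / 2) f - Ec (-1 / 2) f := by
  have hdiff := (hasSum_Ec (1 / 2) f).sub (hasSum_Ec (-1 / 2) f)
  refine ((hasSum_nab f).mul_left epsB).unique ?_
  rw [← hasSum_nat_add_iff' 1] at hdiff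
  simpa [pow_succ', mul_assoc, sub_div, sub_smul, mul_sub] using hdiff

theorem Ec_add (c : ℚ) (f g : B) : Ec c (f + g) = Ec c f + Ec c g := by
  refine (hasSum_Ec c (f + g)).unique <| ((hasSum_Ec c f).add (hasSum_Ec c g)).congr_fun fun j ↦ ?_
  rw [Dop_eq_pderiv, iterate_map_add, smul_add, mul_add]

theorem Ec_mul (c : ℚ) (f g : B) : Ec c (f * g) = Ec c f * Ec c g := by
  refine (hasSum_Ec c (f * g)).unique <|
    (hasSum_X_pow_mul_mul (s := none) (hasSum_Ec c f) (hasSum_Ec c g)).congr_fun fun n ↦ ?_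
  rw [Dop_eq_pderiv, iterate_derivation_mul, smul_sum]
  refine congrArg (epsB ^ n * ·) (sum_congr rfl fun p hp ↦ ?_)
  obtain rfl := mem_antidiagonal.mp hp
  rw [smul_mul_smul_comm, ← Nat.cast_smul_eq_nsmul ℚ, smul_smul, Nat.cast_add_choose, pow_add]
  congr 1
  field_simp

theorem Ec_of_Dop_Dop_eq_zero {f : B} (hf : Dop (Dop f) = 0) (c : ℚ) :
    Ec c f = f + c • (epsB * Dop f) := by
  have hvanish (j : ℕ) : Dop^[j + 2] f = 0 := by
    rw [Function.iterate_add_apply, Function.iterate_succ_apply', Function.iterate_one, hf,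
      Dop_eq_pderiv, iterate_map_zero]
  refine (hasSum_Ec c f).unique ?_
  have hsum : HasSum (fun j ↦ epsB ^ j * ((c ^ j / (j ! : ℚ)) • Dop^[j] f))
      (∑ j ∈ range 2, epsB ^ j * ((c ^ j / (j ! : ℚ)) • Dop^[j] f)) := by
    refine hasSum_sum_of_ne_finset_zero fun j hj ↦ ?_
    obtain ⟨i, rfl⟩ := Nat.exists_eq_add_of_le' (not_lt.mp (mt mem_range.mpr hj))
    rw [hvanish, smul_zero, mul_zero]
  simpa [sum_range_succ] using hsum

theorem pderiv_Ec (i : ℕ ⊕ ℕ) (c : ℚ) (f : B) :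
    pderiv Base (some i) (Ec c f) = Ec c (pderiv Base (some i) f) := by
  have hmap := (hasSum_Ec c f).map (pderiv Base (some i)) (continuous_pderiv (some i))
  refine hmap.unique <| (hasSum_Ec c _).congr_fun fun j ↦ ?_
  have hcomm : Function.Commute (pderiv Base (some i)) Dop := fun g ↦ by
    rw [Dop_eq_pderiv, pderiv_pderiv_comm]
  have heps : pderiv Base (some i) (epsB ^ j) = 0 := by
    rw [Derivation.leibniz_pow, epsB, pderiv_X_of_ne (by simp), smul_zero, smul_zero]
  rw [Function.comp_apply, Derivation.leibniz, heps, smul_zero, add_zero, smul_eq_mul,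
    map_rat_smul, (hcomm.iterate_right j).eq f]

theorem epsB_ne_zero : epsB ≠ 0 := fun h ↦ by
  simpa [epsB, coeff_X] using congrArg (coeff (Finsupp.single none 1)) h

theorem epsB_mul_cancel {f g : B} (h : epsB * f = epsB * g) : f = g :=
  mul_left_cancel₀ epsB_ne_zero h

theorem two_mul_cancel {f g : B} (h : 2 * f = 2 * g) : f = g :=
  have := algebraRat.charZero B
  mul_left_cancel₀ two_ne_zero h

theorem isLinearMap_nab : IsLinearMap ℚ nab :=
  (AddMonoidHom.mk' nab fun f g ↦ epsB_mul_cancel <| by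
    linear_combination epsB_mul_nab (f + g) - epsB_mul_nab f - epsB_mul_nab g
      + Ec_add (1 / 2) f g - Ec_add (-1 / 2) f g).toRatLinearMap.isLinear

theorem isLinearMap_Delta : IsLinearMap ℚ Delta :=
  (AddMonoidHom.mk' Delta fun f g ↦ by
    linear_combination Delta_eq_Ec_add_Ec (f + g) - Delta_eq_Ec_add_Ec f - Delta_eq_Ec_add_Ec g
      + Ec_add (1 / 2) f g + Ec_add (-1 / 2) f g).toRatLinearMap.isLinear

theorem two_mul_nab_mul (f g : B) :
    2 * nab (f * g) = nab f * Delta g + Delta f * nab g :=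
  epsB_mul_cancel <| by
    linear_combination 2 * epsB_mul_nab (f * g) + 2 * Ec_mul (1 / 2) f g
      - 2 * Ec_mul (-1 / 2) f g - Delta g * epsB_mul_nab f - Delta f * epsB_mul_nab g
      - (Ec (1 / 2) f - Ec (-1 / 2) f) * Delta_eq_Ec_add_Ec g
      - (Ec (1 / 2) g - Ec (-1 / 2) g) * Delta_eq_Ec_add_Ec f

theorem two_mul_Delta_mul (f g : B) :
    2 * Delta (f * g) = Delta f * Delta g + epsB ^ 2 * (nab f * nab g) := by
  linear_combination 2 * Delta_eq_Ec_add_Ec (f * g) + 2 * Ec_mul (1 / 2) f g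
    + 2 * Ec_mul (-1 / 2) f g - Delta g * Delta_eq_Ec_add_Ec f
    - (Ec (1 / 2) f + Ec (-1 / 2) f) * Delta_eq_Ec_add_Ec g
    - epsB * nab g * epsB_mul_nab f - (Ec (1 / 2) f - Ec (-1 / 2) f) * epsB_mul_nab g

theorem Delta_of_Dop_Dop_eq_zero {f : B} (hf : Dop (Dop f) = 0) : Delta f = 2 * f := by
  rw [Delta_eq_Ec_add_Ec, Ec_of_Dop_Dop_eq_zero hf, Ec_of_Dop_Dop_eq_zero hf, two_mul]
  module

theorem nab_of_Dop_Dop_eq_zero {f : B} (hf : Dop (Dop f) = 0) : nab f = Dop f :=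
  epsB_mul_cancel <| by
    rw [epsB_mul_nab, Ec_of_Dop_Dop_eq_zero hf, Ec_of_Dop_Dop_eq_zero hf]
    module

theorem nab_pderiv (i : ℕ ⊕ ℕ) (f : B) :
    nab (pderiv Base (some i) f) = pderiv Base (some i) (nab f) := by
  have heps : pderiv Base (some i) epsB = 0 := pderiv_X_of_ne (by simp)
  refine epsB_mul_cancel ?_
  rw [epsB_mul_nab, ← pderiv_Ec, ← pderiv_Ec, ← map_sub, ← epsB_mul_nab, Derivation.leibniz, heps,
    smul_zero, add_zero, smul_eq_mul]

theorem Delta_pderiv (i : ℕ ⊕ ℕ) (f : B) :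
    Delta (pderiv Base (some i) f) = pderiv Base (some i) (Delta f) := by
  rw [Delta_eq_Ec_add_Ec, ← pderiv_Ec, ← pderiv_Ec, ← map_add, ← Delta_eq_Ec_add_Ec]

theorem Dop_zero : Dop 0 = 0 := by
  rw [Dop_eq_pderiv, map_zero]

theorem nab_mul_of_Dop_eq_zero {a : B} (ha : Dop a = 0) (g : B) : nab (a * g) = a * nab g := by
  have hDDa : Dop (Dop a) = 0 := by rw [ha, Dop_zero]
  refine two_mul_cancel ?_
  rw [two_mul_nab_mul, nab_of_Dop_Dop_eq_zero hDDa, Delta_of_Dop_Dop_eq_zero hDDa, ha]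
  ring

theorem Delta_mul_of_Dop_eq_zero {a : B} (ha : Dop a = 0) (g : B) :
    Delta (a * g) = a * Delta g := by
  have hDDa : Dop (Dop a) = 0 := by rw [ha, Dop_zero]
  refine two_mul_cancel ?_
  rw [two_mul_Delta_mul, nab_of_Dop_Dop_eq_zero hDDa, Delta_of_Dop_Dop_eq_zero hDDa, ha]
  ring

theorem continuous_iterate_Dop (n : ℕ) : Continuous Dop^[n] := by
  rw [Dop_eq_pderiv]
  exact (continuous_pderiv _).iterate n

theorem continuous_nab : Continuous nab :=
  continuous_sum_coeff_sub_single none fun j ↦ (continuous_iterate_Dop (j + 1)).const_smul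
    (((1 / 2 : ℚ) ^ (j + 1) - (-1 / 2 : ℚ) ^ (j + 1)) / ((j + 1)! : ℚ))

theorem continuous_Delta : Continuous Delta :=
  continuous_sum_coeff_sub_single none fun j ↦ (continuous_iterate_Dop j).const_smul
    (((1 / 2 : ℚ) ^ j + (-1 / 2 : ℚ) ^ j) / (j ! : ℚ))

theorem isLinearMap_Dcal : IsLinearMap ℚ (Dcal F) where
  map_add f g := by
    simp only [Dcal, pdQ_eq_pderiv, map_add, isLinearMap_nab.map_add, isLinearMap_Delta.map_add]
    ring
  map_smul c f := by
    simp only [Dcal, pdQ_eq_pderiv, map_rat_smul, isLinearMap_nab.map_smul,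
      isLinearMap_Delta.map_smul, mul_smul_comm, smul_add]

theorem continuous_Dcal : Continuous (Dcal F) := by
  have hpdQ : Continuous (pdQ 0) := by
    rw [pdQ_eq_pderiv]
    exact continuous_pderiv _
  exact (continuous_const.mul continuous_nab).add (continuous_Delta.comp hpdQ)

theorem Dcal_mul_of_Dop_eq_zero {a : B} (ha : Dop a = 0) (g : B) :
    Dcal F (a * g) = a * Dcal F g + pdQ 0 a * Delta g := by
  have hDQa : Dop (pdQ 0 a) = 0 := by
    rw [Dop_eq_pderiv, pdQ_eq_pderiv, pderiv_pderiv_comm, ← Dop_eq_pderiv, ha, map_zero]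
  have hleibniz : pdQ 0 (a * g) = a * pdQ 0 g + pdQ 0 a * g := by
    rw [pdQ_eq_pderiv, Derivation.leibniz, smul_eq_mul, smul_eq_mul, mul_comm g]
  rw [Dcal, Dcal, hleibniz, isLinearMap_Delta.map_add, nab_mul_of_Dop_eq_zero ha,
    Delta_mul_of_Dop_eq_zero ha, Delta_mul_of_Dop_eq_zero hDQa]
  ring

theorem two_mul_Dcal_mul (f g : B) :
    2 * Dcal F (f * g) = Dcal F f * Delta g + Delta f * Dcal F g
      + epsB ^ 2 * (nab (pdQ 0 f) * nab g + nab f * nab (pdQ 0 g)) := by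
  have hleibniz : pdQ 0 (f * g) = f * pdQ 0 g + g * pdQ 0 f := by
    rw [pdQ_eq_pderiv, Derivation.leibniz, smul_eq_mul, smul_eq_mul]
  simp only [Dcal, hleibniz, isLinearMap_Delta.map_add]
  linear_combination vB F * two_mul_nab_mul f g + two_mul_Delta_mul f (pdQ 0 g)
    + two_mul_Delta_mul g (pdQ 0 f)

end ShiftOperators

section QuadraticPart

/-- The correlators with a shifted index: `corrQ F (i + 1)` is `⟨⟨τ_{i,Q}⟩⟩`, and the convention
`⟨⟨τ_{-1,Q}⟩⟩ = s₀` absorbs the exceptional terms of the first constraints. -/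
def corrQ : ℕ → B
  | 0 => sVar 0
  | i + 1 => pdQ i F

/-- The insertion of `τ_{i-1,Q}`, that is `∂_{i-1,Q}` for `i ≥ 1`, and `0` for `i = 0`. -/
def insQ : ℕ → Derivation Base B B
  | 0 => 0
  | i + 1 => pderiv Base (some (Sum.inr i))

variable {F}

theorem Dop_Dop_sVar_zero : Dop (Dop (sVar 0)) = 0 := by
  rw [Dop_eq_pderiv, sVar, pderiv_X_self, Derivation.map_one_eq_zero]

theorem nab_sVar_zero : nab (sVar 0) = 1 := by
  rw [nab_of_Dop_Dop_eq_zero Dop_Dop_sVar_zero, Dop_eq_pderiv, sVar, pderiv_X_self]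

theorem insQ_sVar (i k : ℕ) : insQ i (sVar k) = 0 := by
  cases i with
  | zero => rfl
  | succ i => exact pderiv_X_of_ne (by simp)

theorem insQ_corrQ_comm (i j : ℕ) : insQ i (corrQ F j) = insQ j (corrQ F i) := by
  match i, j with
  | 0, j => rw [corrQ, insQ_sVar]; rfl
  | i, 0 => rw [corrQ, insQ_sVar]; rfl
  | i + 1, j + 1 =>
    simp only [corrQ, insQ, pdQ_eq_pderiv]
    exact pderiv_pderiv_comm _ _ F

theorem nab_insQ (i : ℕ) (g : B) : nab (insQ i g) = insQ i (nab g) := by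
  cases i with
  | zero => exact isLinearMap_nab.map_zero
  | succ i => exact nab_pderiv (Sum.inr i) g

theorem pdQ_sVar (i k : ℕ) : pdQ i (sVar k) = 0 := by
  rw [pdQ_eq_pderiv]
  exact insQ_sVar (i + 1) k

theorem Dcal_insQ (i : ℕ) (g : B) :
    Dcal F (insQ i g) = insQ i (Dcal F g) - nab (pdQ 0 (corrQ F i)) * nab g := by
  cases i with
  | zero =>
    rw [corrQ, pdQ_sVar, isLinearMap_nab.map_zero, zero_mul, sub_zero]
    exact isLinearMap_Dcal F |>.map_zero
  | succ i =>
    simp only [Dcal, vB, insQ, corrQ, pdQ_eq_pderiv, map_add, Derivation.leibniz, smul_eq_mul,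
      nab_pderiv, Delta_pderiv, pderiv_pderiv_comm (some (Sum.inr 0))]
    ring

theorem Dcal_corrQ (hy : ∀ k, y F k = 0) (i : ℕ) :
    Dcal F (corrQ F i) = ((i : ℚ) + 1) • nab (corrQ F (i + 1)) := by
  cases i with
  | zero =>
    rw [corrQ, Dcal, nab_sVar_zero, pdQ_sVar, isLinearMap_Delta.map_zero]
    simp [corrQ, vB]
  | succ i =>
    rw [Nat.cast_succ, add_assoc, one_add_one_eq_two]
    exact sub_eq_zero.mp (hy i)

variable (F) in
/-- The summand `ε²⟨⟨τ_{i-1,Q}τ_{j-1,Q}⟩⟩ + ⟨⟨τ_{i-1,Q}⟩⟩⟨⟨τ_{j-1,Q}⟩⟩` of the quadratic part of the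
Virasoro constraints. -/
def quadTerm (i j : ℕ) : B := epsB ^ 2 * insQ i (corrQ F j) + corrQ F i * corrQ F j

variable (F) in
/-- Half of `2∇(quadTerm F i j)`, whose other half is `halfNabQuadTerm F j i`. -/
def halfNabQuadTerm (i j : ℕ) : B :=
  epsB ^ 2 * nab (insQ i (corrQ F j)) + Delta (corrQ F i) * nab (corrQ F j)

theorem Dop_epsB_sq : Dop (epsB ^ 2) = 0 := by
  rw [Dop_eq_pderiv, Derivation.leibniz_pow, epsB, pderiv_X_of_ne (by simp), smul_zero, smul_zero]

theorem pdQ_epsB_sq (k : ℕ) : pdQ k (epsB ^ 2) = 0 := by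
  rw [pdQ_eq_pderiv, Derivation.leibniz_pow, epsB, pderiv_X_of_ne (by simp), smul_zero, smul_zero]

theorem two_mul_nab_quadTerm (i j : ℕ) :
    2 * nab (quadTerm F i j) = halfNabQuadTerm F i j + halfNabQuadTerm F j i := by
  rw [quadTerm, isLinearMap_nab.map_add, nab_mul_of_Dop_eq_zero Dop_epsB_sq, halfNabQuadTerm,
    halfNabQuadTerm, ← insQ_corrQ_comm i j]
  linear_combination two_mul_nab_mul (corrQ F i) (corrQ F j)

theorem Dcal_insQ_corrQ (hy : ∀ k, y F k = 0) (i j : ℕ) :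
    Dcal F (insQ i (corrQ F j)) = ((j : ℚ) + 1) • nab (insQ i (corrQ F (j + 1)))
      - nab (pdQ 0 (corrQ F i)) * nab (corrQ F j) := by
  rw [Dcal_insQ, Dcal_corrQ hy, map_rat_smul, nab_insQ]

theorem two_mul_Dcal_quadTerm (hy : ∀ k, y F k = 0) (i j : ℕ) :
    2 * Dcal F (quadTerm F i j) = ((j : ℚ) + 1) • halfNabQuadTerm F i (j + 1)
      + ((i : ℚ) + 1) • halfNabQuadTerm F j (i + 1) := by
  have hmul := two_mul_Dcal_mul F (corrQ F i) (corrQ F j)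
  have hij := Dcal_insQ_corrQ hy i j
  have hji := Dcal_insQ_corrQ hy j i
  rw [insQ_corrQ_comm j i] at hji
  rw [Dcal_corrQ hy, Dcal_corrQ hy] at hmul
  rw [quadTerm, isLinearMap_Dcal F |>.map_add, Dcal_mul_of_Dop_eq_zero F Dop_epsB_sq, pdQ_epsB_sq,
    halfNabQuadTerm, halfNabQuadTerm]
  simp only [smul_add, ← mul_smul_comm] at hmul ⊢
  linear_combination hmul + epsB ^ 2 * (hij + hji)

variable (F) in
/-- The quadratic part of the Virasoro constraint `z_{n-1}`, completed by the summands with `i = 0`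
or `j = 0`. -/
def quadSum : ℕ → B
  | 0 => 0
  | n + 1 => ∑ p ∈ antidiagonal n, (p.1 ! * p.2 ! : ℚ) • quadTerm F p.1 p.2

theorem nab_quadSum_succ (n : ℕ) :
    nab (quadSum F (n + 1)) =
      ∑ p ∈ antidiagonal n, (p.1 ! * p.2 ! : ℚ) • halfNabQuadTerm F p.1 p.2 := by
  have hswap : ∑ p ∈ antidiagonal n, (p.1 ! * p.2 ! : ℚ) • halfNabQuadTerm F p.2 p.1 =
      ∑ p ∈ antidiagonal n, (p.1 ! * p.2 ! : ℚ) • halfNabQuadTerm F p.1 p.2 := by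
    rw [← Nat.sum_antidiagonal_swap]
    simp only [Prod.fst_swap, Prod.snd_swap, mul_comm]
  refine two_mul_cancel ?_
  calc 2 * nab (quadSum F (n + 1))
      = ∑ p ∈ antidiagonal n,
          (p.1 ! * p.2 ! : ℚ) • (halfNabQuadTerm F p.1 p.2 + halfNabQuadTerm F p.2 p.1) := by
        rw [quadSum, ← isLinearMap_nab.mk'_apply, map_sum, mul_sum]
        refine sum_congr rfl fun p _ ↦ ?_
        rw [map_smul, isLinearMap_nab.mk'_apply, mul_smul_comm, two_mul_nab_quadTerm]
    _ = 2 * ∑ p ∈ antidiagonal n, (p.1 ! * p.2 ! : ℚ) • halfNabQuadTerm F p.1 p.2 := by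
        simp only [smul_add, sum_add_distrib]
        rw [hswap, two_mul]

theorem Dcal_quadSum_succ (hy : ∀ k, y F k = 0) (n : ℕ) :
    Dcal F (quadSum F (n + 1)) =
      ∑ p ∈ antidiagonal n, (p.1 ! * (p.2 + 1)! : ℚ) • halfNabQuadTerm F p.1 (p.2 + 1) := by
  have hterm (p : ℕ × ℕ) : 2 * (p.1 ! * p.2 ! : ℚ) • Dcal F (quadTerm F p.1 p.2) =
      (p.1 ! * (p.2 + 1)! : ℚ) • halfNabQuadTerm F p.1 (p.2 + 1)
        + (p.2 ! * (p.1 + 1)! : ℚ) • halfNabQuadTerm F p.2 (p.1 + 1) := by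
    rw [mul_smul_comm, two_mul_Dcal_quadTerm hy]
    push_cast [Nat.factorial_succ]
    module
  have hswap :
      ∑ p ∈ antidiagonal n, (p.2 ! * (p.1 + 1)! : ℚ) • halfNabQuadTerm F p.2 (p.1 + 1) =
        ∑ p ∈ antidiagonal n, (p.1 ! * (p.2 + 1)! : ℚ) • halfNabQuadTerm F p.1 (p.2 + 1) := by
    rw [← Nat.sum_antidiagonal_swap]
    rfl
  refine two_mul_cancel ?_
  calc 2 * Dcal F (quadSum F (n + 1))
      = ∑ p ∈ antidiagonal n, ((p.1 ! * (p.2 + 1)! : ℚ) • halfNabQuadTerm F p.1 (p.2 + 1)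
          + (p.2 ! * (p.1 + 1)! : ℚ) • halfNabQuadTerm F p.2 (p.1 + 1)) := by
        rw [quadSum, ← (isLinearMap_Dcal F).mk'_apply, map_sum, mul_sum]
        refine sum_congr rfl fun p _ ↦ ?_
        rw [map_smul, (isLinearMap_Dcal F).mk'_apply, hterm]
    _ = 2 * ∑ p ∈ antidiagonal n,
          (p.1 ! * (p.2 + 1)! : ℚ) • halfNabQuadTerm F p.1 (p.2 + 1) := by
        rw [sum_add_distrib, hswap, two_mul]

theorem halfNabQuadTerm_zero_right (n : ℕ) : halfNabQuadTerm F n 0 = Delta (corrQ F n) := by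
  rw [halfNabQuadTerm, corrQ, insQ_sVar, isLinearMap_nab.map_zero, nab_sVar_zero, mul_zero,
    zero_add, mul_one]

theorem Dcal_quadSum (hy : ∀ k, y F k = 0) (n : ℕ) :
    Dcal F (quadSum F n) = nab (quadSum F (n + 1)) - (n ! : ℚ) • Delta (corrQ F n) := by
  rw [nab_quadSum_succ, ← halfNabQuadTerm_zero_right]
  cases n with
  | zero => simpa [quadSum] using isLinearMap_Dcal F |>.map_zero
  | succ n =>
    rw [Dcal_quadSum_succ hy, Nat.sum_antidiagonal_succ']
    simp

end QuadraticPart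

section Coefficients

theorem cc_natCast_sub_one (n m : ℕ) : cc ((n : ℤ) - 1) m = (m.ascFactorial n : ℚ) := by
  simp [cc, Nat.ascFactorial_eq_prod_range]

theorem dd_neg_one (m : ℕ) : dd (-1) m = 0 := rfl

theorem dd_natCast (n m : ℕ) :
    dd n m = dd ((n : ℤ) - 1) m * (m + n) + m.ascFactorial n := by
  have herase : (range (n + 1)).erase n = range n := by
    rw [range_add_one, erase_insert notMem_range_self]
  have hproduct (j : ℕ) (hj : j ∈ range n) : ∏ l ∈ (range (n + 1)).erase j, ((m : ℚ) + l) =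
      (∏ l ∈ (range n).erase j, ((m : ℚ) + l)) * (m + n) := by
    rw [range_add_one, erase_insert_of_ne (mem_range.mp hj).ne',
      prod_insert (fun h ↦ notMem_range_self (mem_of_mem_erase h)), mul_comm]
  rw [← cc_natCast_sub_one, dd, dd, cc, sub_add_cancel, Int.toNat_natCast,
    Int.toNat_natCast_add_one, sum_range_succ, herase, sum_congr rfl hproduct, sum_mul]

theorem dd_natCast_zero (n : ℕ) : dd n 0 = n ! := by
  induction n with
  | zero => simp [dd]
  | succ n ih =>
    rw [dd_natCast, Nat.cast_succ, add_sub_cancel_right, ih, Nat.zero_ascFactorial]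
    push_cast [Nat.factorial_succ]
    ring

end Coefficients

section Virasoro

theorem tauP_natCast (i : ℕ) : tauP F i = pdP i F := by
  simp [tauP]

theorem tauQ_natCast_sub_one (i : ℕ) :
    tauQ F ((i : ℤ) - 1) = if i = 0 then 0 else corrQ F i := by
  cases i <;> simp [tauQ, corrQ]

theorem quad_add_one (n : ℕ) :
    quad F ((n : ℤ) + 1) =
      ∑ i ∈ range n, ((i + 1)! * (n - i)! : ℚ) • quadTerm F (i + 1) (n - i) := by
  rw [quad, add_sub_cancel_right, Int.toNat_natCast]
  refine sum_congr rfl fun i hi ↦ ?_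
  obtain ⟨j, rfl⟩ := Nat.exists_eq_add_of_lt (mem_range.mp hi)
  have hfactorial : (((i + j + 1 : ℕ) : ℤ) + 1 - (i + 1)).toNat = j + 1 := by omega
  have hindex : (((i + j + 1 : ℕ) : ℤ) + 1 - (i + 2)).toNat = j := by omega
  have hsub : i + j + 1 - i = j + 1 := by omega
  rw [hfactorial, hindex, hsub, quadTerm, corrQ, corrQ, insQ, ← pdQ_eq_pderiv]

theorem quadTerm_zero_left (i : ℕ) : quadTerm F 0 i = sVar 0 * corrQ F i := by
  rw [quadTerm, insQ, Derivation.zero_apply, mul_zero, zero_add, corrQ]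

theorem quadTerm_zero_right (i : ℕ) : quadTerm F i 0 = sVar 0 * corrQ F i := by
  rw [quadTerm, corrQ, insQ_sVar, mul_zero, zero_add, mul_comm]

theorem quadSum_eq (n : ℕ) :
    quadSum F n = quad F ((n : ℤ) - 1)
      + (2 * dd ((n : ℤ) - 1) 0) • (sVar 0 * tauQ F ((n : ℤ) - 1 - 1))
      + if (n : ℤ) - 1 = 0 then sVar 0 ^ 2 else 0 := by
  match n with
  | 0 => simp [quadSum, quad, dd_neg_one]
  | 1 => simp [quadSum, quad, quadTerm_zero_left, corrQ, tauQ, sq]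
  | n + 2 =>
    have hindex : ((n + 2 : ℕ) : ℤ) - 1 = ((n + 1 : ℕ) : ℤ) := by omega
    rw [hindex, dd_natCast_zero, tauQ_natCast_sub_one, if_neg n.succ_ne_zero,
      if_neg (by exact_mod_cast n.succ_ne_zero), Nat.cast_succ, quad_add_one, quadSum,
      Nat.sum_antidiagonal_eq_sum_range_succ
        fun i j ↦ (i ! * j ! : ℚ) • quadTerm F i j,
      sum_range_succ, sum_range_succ', Nat.sub_self, quadTerm_zero_right, Nat.sub_zero,
      quadTerm_zero_left]
    simp only [Nat.add_sub_add_right, Nat.factorial_zero, Nat.cast_one]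
    module

/-- The dilaton-shifted variable `s̃ₘ = sₘ − δ_{m,1}`. -/
def sTilde (m : ℕ) : B := sVar m - if m = 1 then 1 else 0

/-- The summands of the linear part of the Virasoro constraint `z_{n-1}`, indexed by the variable
they contain. The summand of `s₀` is counted in `quadSum` instead. -/
def virasoroTerm (n : ℕ) : Idx → B
  | some (Sum.inl (m + 1)) => sTilde (m + 1) *
      (((m + 1).ascFactorial n : ℚ) • pdP (m + n) F
        + (2 * dd ((n : ℤ) - 1) (m + 1)) • corrQ F (m + n))
  | some (Sum.inr m) => ((m + 1).ascFactorial n : ℚ) • (tVar m * corrQ F (m + n))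
  | some (Sum.inl 0) => 0
  | none => 0

/-- The cofactor of each variable in the linear part of the constraint `z_{n-1}`, before the
dilaton shift. -/
def virasoroCofactor (n : ℕ) : Idx → B
  | some (Sum.inl m) => cc ((n : ℤ) - 1) m • tauP F ((m : ℤ) + (n - 1))
      + (2 * dd ((n : ℤ) - 1) m) • tauQ F ((m : ℤ) + (n - 1) - 1)
  | some (Sum.inr m) => cc ((n : ℤ) - 1) (m + 1) • tauQ F ((m : ℤ) + (n - 1))
  | none => 0

theorem z_eq_of_hasSum {n : ℕ} {L : B} (hL : HasSum (fun i ↦ X i * virasoroCofactor F n i) L) :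
    z F ((n : ℤ) - 1) = L - virasoroCofactor F n (some (Sum.inl 1)) + quad F ((n : ℤ) - 1)
      + (if n = 0 then sVar 0 * tVar 0 else 0)
      + (if (n : ℤ) - 1 = 0 then sVar 0 ^ 2 else 0) := by
  have hn : (n : ℤ) - 1 = -1 ↔ n = 0 := by omega
  have hcofactor : virasoroCofactor F n (some (Sum.inl 1)) =
      cc ((n : ℤ) - 1) 1 • tauP F (1 + ((n : ℤ) - 1))
        + (2 * dd ((n : ℤ) - 1) 1) • tauQ F ((n : ℤ) - 1) := by
    simp [virasoroCofactor]
  have hsum : L = mk' _ := hL.unique (hasSum_X_mul _)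
  rw [hsum, hcofactor, ← sub_sub, z]
  simp only [hn]
  congr 6
  refine funext fun μ ↦ sum_congr rfl fun i _ ↦ ?_
  rcases i with _ | m | m <;> rfl

theorem two_mul_dd_smul_tauQ {n i : ℕ} (hi : n ≤ i) (m : ℕ) :
    (2 * dd ((n : ℤ) - 1) m) • tauQ F ((i : ℤ) - 1) =
      (2 * dd ((n : ℤ) - 1) m) • corrQ F i := by
  rw [tauQ_natCast_sub_one]
  split_ifs with h
  · obtain rfl : n = 0 := by omega
    simp [dd_neg_one]
  · rfl

theorem virasoroCofactor_inl_succ (n m : ℕ) :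
    virasoroCofactor F n (some (Sum.inl (m + 1))) =
      ((m + 1).ascFactorial n : ℚ) • pdP (m + n) F
        + (2 * dd ((n : ℤ) - 1) (m + 1)) • corrQ F (m + n) := by
  have hindex : ((m + 1 : ℕ) : ℤ) + ((n : ℤ) - 1) = (m + n : ℕ) := by omega
  rw [virasoroCofactor, cc_natCast_sub_one, hindex, tauP_natCast,
    two_mul_dd_smul_tauQ F (n.le_add_left m)]

theorem virasoroCofactor_inl_zero (n : ℕ) :
    virasoroCofactor F n (some (Sum.inl 0)) =
      (2 * dd ((n : ℤ) - 1) 0) • tauQ F ((n : ℤ) - 1 - 1) := by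
  have hcc : cc ((n : ℤ) - 1) 0 • tauP F ((n : ℤ) - 1) = 0 := by
    cases n with
    | zero => simp [tauP]
    | succ n => rw [cc_natCast_sub_one, Nat.zero_ascFactorial, Nat.cast_zero, zero_smul]
  rw [virasoroCofactor, Nat.cast_zero, zero_add, hcc, zero_add]

theorem virasoroCofactor_inr (n m : ℕ) :
    virasoroCofactor F n (some (Sum.inr m)) = ((m + 1).ascFactorial n : ℚ) •
      (corrQ F (m + n) - if m = 0 ∧ n = 0 then sVar 0 else 0) := by
  have hindex : (m : ℤ) + ((n : ℤ) - 1) = (m + n : ℕ) - 1 := by omega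
  rw [virasoroCofactor, cc_natCast_sub_one, hindex, tauQ_natCast_sub_one]
  simp only [Nat.add_eq_zero_iff]
  split_ifs with h
  · rw [h.1, h.2, corrQ, sub_self]
  · rw [sub_zero]

theorem virasoroTerm_eq (n : ℕ) (i : Idx) :
    virasoroTerm F n i = X i * virasoroCofactor F n i
      - (if i = some (Sum.inl 0) then sVar 0 * virasoroCofactor F n (some (Sum.inl 0)) else 0)
      - (if i = some (Sum.inl 1) then virasoroCofactor F n (some (Sum.inl 1)) else 0)
      + (if i = some (Sum.inr 0) then if n = 0 then sVar 0 * tVar 0 else 0 else 0) := by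
  rcases i with _ | (_ | m) | m
  · simp [virasoroTerm, virasoroCofactor]
  · simp [virasoroTerm, sVar]
  · rcases m with _ | m <;>
      simp [virasoroTerm, virasoroCofactor_inl_succ, sTilde, sVar, sub_mul]
  · rcases m with _ | m <;> rcases n with _ | n <;>
      simp [virasoroTerm, virasoroCofactor_inr, tVar, mul_sub, mul_comm (sVar 0)]

theorem hasSum_virasoroTerm (n : ℕ) :
    HasSum (virasoroTerm F n) (z F ((n : ℤ) - 1) - quadSum F n) := by
  obtain ⟨L, hL⟩ : ∃ L : B, HasSum (fun i ↦ X i * virasoroCofactor F n i) L :=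
    ⟨_, hasSum_X_mul _⟩
  have hsum := (((hL.sub (hasSum_ite_eq (some (Sum.inl 0)) _)).sub
    (hasSum_ite_eq (some (Sum.inl 1)) _)).add
    (hasSum_ite_eq (some (Sum.inr 0)) _)).congr_fun (virasoroTerm_eq F n)
  suffices hvalue : z F ((n : ℤ) - 1) - quadSum F n =
      L - sVar 0 * virasoroCofactor F n (some (Sum.inl 0)) - virasoroCofactor F n (some (Sum.inl 1))
        + if n = 0 then sVar 0 * tVar 0 else 0 from hvalue ▸ hsum
  rw [z_eq_of_hasSum F hL, quadSum_eq, virasoroCofactor_inl_zero, mul_smul_comm]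
  abel

end Virasoro

section Recursion

variable {F}

theorem Dop_sTilde_succ (m : ℕ) : Dop (sTilde (m + 1)) = 0 := by
  rw [Dop_eq_pderiv, sTilde, sVar, map_sub, pderiv_X_of_ne (by simp), zero_sub, neg_eq_zero]
  split_ifs
  · exact Derivation.map_one_eq_zero _
  · exact map_zero _

theorem pdQ_sTilde (k m : ℕ) : pdQ k (sTilde m) = 0 := by
  rw [sTilde, pdQ_eq_pderiv, map_sub, ← pdQ_eq_pderiv, pdQ_sVar, zero_sub, neg_eq_zero]
  split_ifs
  · rw [pdQ_eq_pderiv, Derivation.map_one_eq_zero]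
  · rw [pdQ_eq_pderiv, map_zero]

theorem Dop_tVar (m : ℕ) : Dop (tVar m) = 0 := by
  rw [Dop_eq_pderiv]
  exact pderiv_X_of_ne (by simp)

theorem pdQ_zero_tVar (m : ℕ) : pdQ 0 (tVar m) = if m = 0 then 1 else 0 := by
  rw [pdQ_eq_pderiv, tVar]
  split_ifs with h
  · rw [h, pderiv_X_self]
  · exact pderiv_X_of_ne (by simpa using h)

theorem Dcal_pdP (k : ℕ) :
    Dcal F (pdP k F) = x F k + ((k : ℚ) + 1) • nab (pdP (k + 1) F)
      + (2 : ℚ) • nab (corrQ F (k + 1)) := by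
  rw [x, corrQ]
  abel

theorem Dcal_sub_nab_virasoroTerm_inl (hy : ∀ k, y F k = 0) (n m : ℕ) :
    Dcal F (virasoroTerm F n (some (Sum.inl (m + 1))))
        - nab (virasoroTerm F (n + 1) (some (Sum.inl (m + 1)))) =
      ((m + 1).ascFactorial n : ℚ) • (sTilde (m + 1) * x F (m + n)) := by
  rw [virasoroTerm, virasoroTerm, Dcal_mul_of_Dop_eq_zero F (Dop_sTilde_succ m), pdQ_sTilde,
    zero_mul, add_zero, nab_mul_of_Dop_eq_zero (Dop_sTilde_succ m), ← mul_sub, ← mul_smul_comm,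
    (isLinearMap_Dcal F).map_add, (isLinearMap_Dcal F).map_smul, (isLinearMap_Dcal F).map_smul,
    isLinearMap_nab.map_add, isLinearMap_nab.map_smul, isLinearMap_nab.map_smul, Dcal_pdP,
    Dcal_corrQ hy, Nat.cast_succ n, add_sub_cancel_right, dd_natCast, Nat.ascFactorial_succ,
    ← add_assoc m n 1]
  congr 1
  push_cast
  module

theorem Dcal_sub_nab_virasoroTerm_inr (hy : ∀ k, y F k = 0) (n m : ℕ) :
    Dcal F (virasoroTerm F n (some (Sum.inr m))) - nab (virasoroTerm F (n + 1) (some (Sum.inr m))) =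
      if m = 0 then (n ! : ℚ) • Delta (corrQ F n) else 0 := by
  have hpdQ : ((m + 1).ascFactorial n : ℚ) • (pdQ 0 (tVar m) * Delta (corrQ F (m + n))) =
      if m = 0 then (n ! : ℚ) • Delta (corrQ F n) else 0 := by
    rw [pdQ_zero_tVar]
    split_ifs with h
    · rw [h, one_mul, zero_add, zero_add, Nat.one_ascFactorial]
    · rw [zero_mul, smul_zero]
  rw [virasoroTerm, virasoroTerm, (isLinearMap_Dcal F).map_smul, isLinearMap_nab.map_smul,
    Dcal_mul_of_Dop_eq_zero F (Dop_tVar m), nab_mul_of_Dop_eq_zero (Dop_tVar m), smul_add, hpdQ,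
    Dcal_corrQ hy, Nat.ascFactorial_succ, ← add_assoc m n 1, mul_smul_comm]
  push_cast
  module

theorem hasSum_Dcal_sub_nab_virasoroTerm (hz : ∀ k : ℤ, -1 ≤ k → z F k = 0)
    (hy : ∀ k, y F k = 0) (n : ℕ) :
    HasSum (fun i ↦ Dcal F (virasoroTerm F n i) - nab (virasoroTerm F (n + 1) i))
      ((n ! : ℚ) • Delta (corrQ F n)) := by
  have hvirasoro (k : ℕ) : HasSum (virasoroTerm F k) (-quadSum F k) := by
    simpa only [hz ((k : ℤ) - 1) (by omega), zero_sub] using hasSum_virasoroTerm F k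
  have hDcal : HasSum (fun i ↦ Dcal F (virasoroTerm F n i)) (Dcal F (-quadSum F n)) :=
    (hvirasoro n).map (isLinearMap_Dcal F).mk' (continuous_Dcal F)
  have hnab : HasSum (fun i ↦ nab (virasoroTerm F (n + 1) i)) (nab (-quadSum F (n + 1))) :=
    (hvirasoro (n + 1)).map isLinearMap_nab.mk' continuous_nab
  have hvalue : Dcal F (-quadSum F n) - nab (-quadSum F (n + 1)) =
      (n ! : ℚ) • Delta (corrQ F n) := by
    rw [(isLinearMap_Dcal F).map_neg, isLinearMap_nab.map_neg, Dcal_quadSum hy]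
    abel
  rw [← hvalue]
  exact hDcal.sub hnab

theorem hasSum_sTilde_mul_x (hz : ∀ k : ℤ, -1 ≤ k → z F k = 0) (hy : ∀ k, y F k = 0) (n : ℕ) :
    HasSum (fun m ↦ ((m + 1).ascFactorial n : ℚ) • (sTilde (m + 1) * x F (m + n))) 0 := by
  have hsum := (hasSum_Dcal_sub_nab_virasoroTerm hz hy n).sub
    (hasSum_ite_eq (some (Sum.inr 0)) ((n ! : ℚ) • Delta (corrQ F n)))
  rw [sub_self] at hsum
  have hinj : Function.Injective fun m : ℕ ↦ (some (Sum.inl (m + 1)) : Idx) :=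
    fun a b h ↦ by simpa using h
  have hsupport (i : Idx) (hi : i ∉ Set.range fun m : ℕ ↦ (some (Sum.inl (m + 1)) : Idx)) :
      Dcal F (virasoroTerm F n i) - nab (virasoroTerm F (n + 1) i)
        - (if i = some (Sum.inr 0) then (n ! : ℚ) • Delta (corrQ F n) else 0) = 0 := by
    rcases i with _ | (_ | m) | m
    · simp [virasoroTerm, (isLinearMap_Dcal F).map_zero, isLinearMap_nab.map_zero]
    · simp [virasoroTerm, (isLinearMap_Dcal F).map_zero, isLinearMap_nab.map_zero]
    · exact absurd ⟨m, rfl⟩ hi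
    · simp [Dcal_sub_nab_virasoroTerm_inr hy]
  refine ((hinj.hasSum_iff hsupport).mpr hsum).congr_fun fun m ↦ ?_
  simp [Dcal_sub_nab_virasoroTerm_inl hy]

theorem hasSum_ascFactorial_smul_sVar_mul_x (hz : ∀ k : ℤ, -1 ≤ k → z F k = 0)
    (hy : ∀ k, y F k = 0) (n : ℕ) :
    HasSum (fun m ↦ ((m + 1).ascFactorial n : ℚ) • (sVar (m + 1) * x F (m + n)))
      ((n ! : ℚ) • x F n) := by
  have hdilaton := (hasSum_sTilde_mul_x hz hy n).add (hasSum_ite_eq 0 ((n ! : ℚ) • x F n))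
  rw [zero_add] at hdilaton
  refine hdilaton.congr_fun fun m ↦ ?_
  rcases m with _ | m <;> simp [sTilde, sub_mul, smul_sub, Nat.one_ascFactorial]

theorem hasSum_sVar_mul_x (hz : ∀ k : ℤ, -1 ≤ k → z F k = 0) (hy : ∀ k, y F k = 0) (n : ℕ) :
    HasSum (fun m ↦ ((n ! : ℚ)⁻¹ * ((m + 1).ascFactorial n : ℚ)) • sVar (m + 1) * x F (m + n))
      (x F n) := by
  have hscaled := (hasSum_ascFactorial_smul_sVar_mul_x hz hy n).const_smul (n ! : ℚ)⁻¹
  rw [inv_smul_smul₀ (Nat.cast_ne_zero.mpr n.factorial_ne_zero)] at hscaled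
  exact hscaled.congr_fun fun m ↦ by rw [smul_mul_assoc, smul_smul]

end Recursion

theorem virasoro_and_toda_imply_P_recursion (F : B)
    (hz : ∀ k : ℤ, -1 ≤ k → z F k = 0)
    (hy : ∀ k : ℕ, y F k = 0) :
    ∀ k : ℕ, x F k = 0 := by
  refine eq_zero_of_hasSum_mul (fun n m ↦ ?_) (hasSum_sVar_mul_x hz hy)
  simp [sVar]

end
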